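/- Let κ > κ_c. Then the equation 4κ√λ(1−λ) = 1 has a maximal solution λ_m in (0,1); this λ_m satisfies λ_m > 2/3, it is the unique global minimizer of φ_κ on [0,∞), and φ_κ(λ_m) < κ = φ_κ(0). -/

import Mathlib

/-!
Substitute `s = √λ`, `a = √λ_m`. If `4κa(1 - a²) = 1`, eliminating the linear term gives
`φ_κ(s²) - φ_κ(a²) = κ (s - a)² (s² + 2as + 3a² - 2)`,
which is positive for `s ≥ 0`, `s ≠ a` as soon as `a² > 2/3`. So any solution `λ_m > 2/3` is
the unique global minimizer, and comparison with `λ = 0` gives `φ_κ(λ_m) < κ`. Such a solution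
exists by the intermediate value theorem on `[2/3, 1]`, since `κ > κ_c` says exactly that
`4κ√λ(1 - λ) > 1` at `λ = 2/3`; it is maximal because `s(1 - s²)` is strictly decreasing for
`s² ≥ 1/3`.
-/

/-- `φ_κ(λ) = κ(1−λ)² + √λ`. -/
noncomputable def phi (κ l : ℝ) : ℝ := κ * (1 - l) ^ 2 + Real.sqrt l

/-- `κ_c = (1/2)(3/2)^{3/2}`. -/
noncomputable def kappaC : ℝ := (1 / 2) * (3 / 2 : ℝ) ^ ((3 : ℝ) / 2)

lemma kappaC_eq : kappaC = 3 / 4 * Real.sqrt (3 / 2) := by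
  have h : (3 / 2 : ℝ) ^ ((3 : ℝ) / 2) = 3 / 2 * Real.sqrt (3 / 2) := by
    rw [show (3 : ℝ) / 2 = 1 + 1 / 2 by norm_num, Real.rpow_add (by norm_num), Real.rpow_one,
      Real.sqrt_eq_rpow]
  rw [kappaC, h]; ring

/-- The factorization of `φ_κ(s²) - φ_κ(a²)` at a critical point `a²`. -/
lemma psi_sub {κ a : ℝ} (ha : 4 * κ * a * (1 - a ^ 2) = 1) (s : ℝ) :
    (κ * (1 - s ^ 2) ^ 2 + s) - (κ * (1 - a ^ 2) ^ 2 + a)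
      = κ * ((s - a) ^ 2 * (s ^ 2 + 2 * a * s + (3 * a ^ 2 - 2))) := by
  linear_combination (-(s - a)) * ha

lemma phi_lt_of_critical {κ m l : ℝ} (hκ : 0 < κ) (hm : 2 / 3 < m)
    (hcrit : 4 * κ * Real.sqrt m * (1 - m) = 1) (hl : 0 ≤ l) (hne : l ≠ m) :
    phi κ m < phi κ l := by
  have hm0 : 0 ≤ m := by linarith
  have hsm := Real.sq_sqrt hm0
  have hsl := Real.sq_sqrt hl
  have h := psi_sub (κ := κ) (a := Real.sqrt m) (by rw [hsm]; exact hcrit) (Real.sqrt l)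
  have hsub : Real.sqrt l - Real.sqrt m ≠ 0 := fun h0 =>
    hne ((Real.sqrt_inj hl hm0).1 (sub_eq_zero.1 h0))
  have hpos : 0 < κ * ((Real.sqrt l - Real.sqrt m) ^ 2 *
      (Real.sqrt l ^ 2 + 2 * Real.sqrt m * Real.sqrt l + (3 * Real.sqrt m ^ 2 - 2))) := by
    have h3 : 0 < 3 * Real.sqrt m ^ 2 - 2 := by rw [hsm]; linarith
    positivity
  rw [← h, hsm, hsl] at hpos
  unfold phi
  linarith

lemma exists_critical {κ : ℝ} (h : kappaC < κ) :
    ∃ m : ℝ, 2 / 3 < m ∧ m < 1 ∧ 4 * κ * Real.sqrt m * (1 - m) = 1 := by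
  have hcont : ContinuousOn (fun l : ℝ => 4 * κ * Real.sqrt l * (1 - l)) (Set.Icc (2 / 3) 1) := by
    fun_prop
  have hstart : 1 < 4 * κ * Real.sqrt (2 / 3) * (1 - 2 / 3) := by
    have hs : Real.sqrt (3 / 2) * Real.sqrt (2 / 3) = 1 := by
      rw [← Real.sqrt_mul (by norm_num)]; norm_num
    have hpos : 0 < Real.sqrt (2 / 3) := by positivity
    rw [kappaC_eq] at h
    nlinarith [mul_lt_mul_of_pos_right h hpos]
  obtain ⟨m, ⟨h1, h2⟩, hm⟩ := intermediate_value_Ioo' (by norm_num) hcont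
    (show (1 : ℝ) ∈ _ from ⟨by norm_num, hstart⟩)
  exact ⟨m, h1, h2, hm⟩

/-- Since `√λ(1 - λ)` is strictly decreasing on `[2/3, ∞)`, a solution above `2/3` bounds all
others. -/
lemma le_of_critical {κ m l : ℝ} (hκ : 0 < κ) (hm : 2 / 3 < m)
    (hcrit : 4 * κ * Real.sqrt m * (1 - m) = 1)
    (hl : 4 * κ * Real.sqrt l * (1 - l) = 1) : l ≤ m := by
  by_contra! hlt
  have hm0 : 0 ≤ m := by linarith
  have hl0 : 0 ≤ l := by linarith
  have hs : Real.sqrt m < Real.sqrt l := Real.sqrt_lt_sqrt hm0 hlt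
  have hsm := Real.sq_sqrt hm0
  have hsl := Real.sq_sqrt hl0
  have ha := Real.sqrt_nonneg m
  have hb := Real.sqrt_nonneg l
  generalize Real.sqrt m = a at *
  generalize Real.sqrt l = b at *
  subst hsm hsl
  have key : 4 * κ * ((b - a) * (a ^ 2 + a * b + b ^ 2 - 1)) = 0 := by
    linear_combination hcrit - hl
  have h1 : 0 < a ^ 2 + a * b + b ^ 2 - 1 := by nlinarith [mul_nonneg ha hb]
  have h2 : 0 < b - a := sub_pos.2 hs
  have : 0 < 4 * κ * ((b - a) * (a ^ 2 + a * b + b ^ 2 - 1)) := by positivity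
  linarith

/-- For `κ > κ_c`, the equation `4κ√λ(1−λ) = 1` has a maximal solution `λ_m ∈ (0,1)`;
it satisfies `λ_m > 2/3`, it is the unique global minimizer of `φ_κ` on `[0,∞)`, and
`φ_κ(λ_m) < κ = φ_κ(0)`. -/
theorem stmt_2 (κ : ℝ) (h : kappaC < κ) :
    ∃ lm : ℝ, lm ∈ Set.Ioo (0 : ℝ) 1 ∧
      4 * κ * Real.sqrt lm * (1 - lm) = 1 ∧
      (∀ l ∈ Set.Ioo (0 : ℝ) 1, 4 * κ * Real.sqrt l * (1 - l) = 1 → l ≤ lm) ∧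
      2 / 3 < lm ∧
      (∀ l : ℝ, 0 ≤ l → l ≠ lm → phi κ lm < phi κ l) ∧
      phi κ lm < κ ∧ phi κ 0 = κ := by
  have hκ : 0 < κ := lt_trans (by rw [kappaC_eq]; positivity) h
  obtain ⟨m, hm, hm1, hcrit⟩ := exists_critical h
  have h0 : phi κ 0 = κ := by simp [phi]
  have hmin : ∀ l : ℝ, 0 ≤ l → l ≠ m → phi κ m < phi κ l := fun l hl hne =>
    phi_lt_of_critical hκ hm hcrit hl hne
  refine ⟨m, ⟨by linarith, hm1⟩, hcrit, fun l _ hl => le_of_critical hκ hm hcrit hl, hm, hmin,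
    ?_, h0⟩
  have := hmin 0 le_rfl (by linarith)
  rwa [h0] at this
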